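/- Let P ⊆ ℤ^n_{≥0} be a polymatroid over [n] with rank function f, and let t ∈ [n] satisfy f([n]\{t}) = f([n]). For j ≥ 0, let H^t_j(P) = {H ∈ H_j(P) : t ∉ H}. Then for every j with 0 ≤ j < r_2(P)−1, H_j(P\t) = {H\{t} : H ∈ H_j(P) \ H^t_j(P)} ∪ H^t_{j+1}(P), where P\t is the deletion of t from P. -/

import Mathlib

open Finset Polynomial

/-- `f` is the rank function of a polymatroid over the ground set `[n]` (encoded as `Fin n`):
normalization, monotonicity and submodularity. -/
def IsPolymatroidRank (n : ℕ) (f : Finset (Fin n) → ℕ) : Prop :=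
  f ∅ = 0 ∧ (∀ I J : Finset (Fin n), I ⊆ J → f I ≤ f J) ∧
    ∀ I J : Finset (Fin n), f (I ∪ J) + f (I ∩ J) ≤ f I + f J

/-- The set of bases of the polymatroid `P ⊆ ℤ^n_{≥0}` with rank function `f`:
all nonnegative integer vectors `a` with `∑_{i ∈ I} a i ≤ f I` for every `I ⊆ [n]`
and `∑_{i ∈ [n]} a i = f [n]`.  (Every such vector has entries `≤ f [n]`, whence the
bounding box used to produce a `Finset`.) -/
def polyBases (n : ℕ) (f : Finset (Fin n) → ℕ) : Finset (Fin n → ℤ) :=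
  ((Finset.univ : Finset (Fin n → Fin (f Finset.univ + 1))).image
      (fun a i => ((a i : ℕ) : ℤ))).filter
    fun a => (∀ i, 0 ≤ a i) ∧ (∀ I : Finset (Fin n), ∑ i ∈ I, a i ≤ (f I : ℤ)) ∧
      ∑ i, a i = (f Finset.univ : ℤ)

/-- The externally active indices of a basis `a`: those `i` such that
`a + e_i - e_j ∉ P` for every `j < i`. -/
def extAct (n : ℕ) (f : Finset (Fin n) → ℕ) (a : Fin n → ℤ) : Finset (Fin n) :=
  Finset.univ.filter fun i => ∀ j, j < i →
    (fun t => a t + (if t = i then 1 else 0) - (if t = j then 1 else 0)) ∉ polyBases n f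

/-- The internally active indices of a basis `a`: those `i` such that
`a - e_i + e_j ∉ P` for every `j < i`. -/
def intAct (n : ℕ) (f : Finset (Fin n) → ℕ) (a : Fin n → ℤ) : Finset (Fin n) :=
  Finset.univ.filter fun i => ∀ j, j < i →
    (fun t => a t - (if t = i then 1 else 0) + (if t = j then 1 else 0)) ∉ polyBases n f

/-- The exterior polynomial `X_P(y) = ∑_{a ∈ P} y^(n - |Ext(a)|)`. -/
noncomputable def exteriorPoly (n : ℕ) (f : Finset (Fin n) → ℕ) : Polynomial ℤ :=
  ∑ a ∈ polyBases n f, X ^ (n - (extAct n f a).card)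

/-- The interior polynomial `I_P(x) = ∑_{a ∈ P} x^(n - |Int(a)|)`. -/
noncomputable def interiorPoly (n : ℕ) (f : Finset (Fin n) → ℕ) : Polynomial ℤ :=
  ∑ a ∈ polyBases n f, X ^ (n - (intAct n f a).card)

/-- `r_k(P) = min { n - |F| : F ⊆ [n], f F ≤ f [n] - k }` (junk value `0` if no such `F`). -/
noncomputable def rk (n : ℕ) (f : Finset (Fin n) → ℕ) (k : ℕ) : ℕ :=
  sInf {m | ∃ F : Finset (Fin n), (f F : ℤ) ≤ (f Finset.univ : ℤ) - k ∧ m = n - F.card}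

/-- `r'_k(P) = min { |F| : F ⊆ [n], ∑_{i ∈ F} f {i} - f F ≥ k }` (junk value `0` if no such `F`). -/
noncomputable def rk' (n : ℕ) (f : Finset (Fin n) → ℕ) (k : ℕ) : ℕ :=
  sInf {m | ∃ F : Finset (Fin n), (k : ℤ) ≤ (∑ i ∈ F, (f {i} : ℤ)) - (f F : ℤ) ∧ m = F.card}

/-- `H_j(P)`: the flats `H` (i.e. `f (H ∪ {e}) > f H` for all `e ∉ H`) with
`f H = f [n] - 1` and `n - |H| = j`. -/
def Hset (n : ℕ) (f : Finset (Fin n) → ℕ) (j : ℕ) : Finset (Finset (Fin n)) :=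
  Finset.univ.filter fun H =>
    (∀ e, e ∉ H → f H < f (insert e H)) ∧ (f H : ℤ) = (f Finset.univ : ℤ) - 1 ∧
      n - H.card = j

/-- `C_j(P)`: the sets `C` with `|C| = j`, `∑_{i ∈ C} f {i} - f C = 1` and
`∑_{i ∈ C \ {j'}} f {i} = f (C \ {j'})` for every `j' ∈ C`. -/
def Cset (n : ℕ) (f : Finset (Fin n) → ℕ) (j : ℕ) : Finset (Finset (Fin n)) :=
  Finset.univ.filter fun C => C.card = j ∧
    (∑ i ∈ C, (f {i} : ℤ)) - (f C : ℤ) = 1 ∧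
    ∀ j' ∈ C, (∑ i ∈ C.erase j', (f {i} : ℤ)) = (f (C.erase j') : ℤ)

/-- The dual rank function `f*(I) = f([n] \ I) - f([n]) + ∑_{i ∈ I} f {i}`
(the subtraction is exact for a polymatroid rank function). -/
def fdual (n : ℕ) (f : Finset (Fin n) → ℕ) : Finset (Fin n) → ℕ :=
  fun I => f (Finset.univ \ I) + (∑ i ∈ I, f {i}) - f Finset.univ

/-- `H_j(Q)` for a polymatroid `Q` over a ground set `S ⊆ [n]` with (ℤ-valued) rank
function `g`: the flats `H ⊆ S` (i.e. `g (H ∪ {e}) > g H` for all `e ∈ S \ H`) with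
`g H = g S - 1` and `|S| - |H| = j`. -/
def HjGen (n : ℕ) (S : Finset (Fin n)) (g : Finset (Fin n) → ℤ) (j : ℕ) :
    Finset (Finset (Fin n)) :=
  S.powerset.filter fun H =>
    (∀ e ∈ S \ H, g H < g (insert e H)) ∧ g H = g S - 1 ∧ S.card - H.card = j

/-- Let `t ∈ [n]` with `f([n]\{t}) = f([n])`.  For every
`0 ≤ j < r_2(P) - 1`, `H_j(P\t) = {H \ {t} : H ∈ H_j(P) \ H^t_j(P)} ∪ H^t_{j+1}(P)`,
where the deletion `P\t` is the polymatroid over `[n]\{t}` with rank function `f`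
restricted, and `H^t_j(P) = {H ∈ H_j(P) : t ∉ H}`. -/
theorem stmt11 (n : ℕ) (f : Finset (Fin n) → ℕ) (hf : IsPolymatroidRank n f)
    (t : Fin n) (ht : f (Finset.univ.erase t) = f Finset.univ) (j : ℕ)
    (hj : j < rk n f 2 - 1) :
    HjGen n (Finset.univ.erase t) (fun I => (f I : ℤ)) j =
      ((HjGen n Finset.univ (fun I => (f I : ℤ)) j \
          ((HjGen n Finset.univ (fun I => (f I : ℤ)) j).filter fun H => t ∉ H)).image
        fun H => H.erase t) ∪
      ((HjGen n Finset.univ (fun I => (f I : ℤ)) (j + 1)).filter fun H => t ∉ H) := by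
  obtain ⟨-, hmono, hsub⟩ := hf
  have hcu : (Finset.univ : Finset (Fin n)).card = n := by simp
  have hce : (Finset.univ.erase t : Finset (Fin n)).card = n - 1 := by simp
  have hn : 0 < n := t.pos
  ext H
  simp only [HjGen, Finset.mem_union, Finset.mem_image, Finset.mem_sdiff, Finset.mem_filter,
    Finset.mem_powerset, Finset.mem_erase, Finset.mem_univ, hcu, hce, ht, Finset.subset_univ,
    true_and, and_true, not_and, not_not]
  constructor
  · rintro ⟨hH, hflat, hr, hc⟩
    have htH : t ∉ H := fun h => by simpa using hH h
    have hle : f H ≤ f (insert t H) := hmono _ _ (Finset.subset_insert _ _)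
    have hlt : H.card ≤ n - 1 := by
      rw [← hce]; exact Finset.card_le_card hH
    by_cases hft : f H < f (insert t H)
    · right
      refine ⟨⟨?_, hr, by omega⟩, htH⟩
      intro e he
      by_cases het : e = t
      · subst het; exact_mod_cast hft
      · exact hflat e ⟨het, he⟩
    · left
      have heq : f (insert t H) = f H := by omega
      refine ⟨insert t H, ⟨⟨?_, by rw [heq]; exact hr, ?_⟩, ?_⟩, Finset.erase_insert htH⟩
      · intro e he
        rw [Finset.mem_insert, not_or] at he
        have h1 := hflat e ⟨he.1, he.2⟩
        have h2 : f (insert e H) ≤ f (insert e (insert t H)) :=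
          hmono _ _ (Finset.insert_subset_insert _ (Finset.subset_insert _ _))
        rw [heq]
        omega
      · rw [Finset.card_insert_of_notMem htH]; omega
      · intro _; exact Finset.mem_insert_self _ _
  · rintro (⟨K, ⟨⟨hflat, hr, hc⟩, hK⟩, rfl⟩ | ⟨⟨hflat, hr, hc⟩, htH⟩)
    · have htK : t ∈ K := hK ⟨hflat, hr, hc⟩
      have hKn : K.card ≤ n := by simpa using Finset.card_le_univ K
      have hKpos : 0 < K.card := Finset.card_pos.mpr ⟨t, htK⟩
      have hcard := Finset.card_erase_of_mem htK
      have hle : f (K.erase t) ≤ f K := hmono _ _ (Finset.erase_subset _ _)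
      have hge : ¬ ((f (K.erase t) : ℤ) ≤ (f Finset.univ : ℤ) - (2 : ℕ)) := by
        intro h
        have : rk n f 2 ≤ n - (K.erase t).card := Nat.sInf_le ⟨_, h, rfl⟩
        omega
      have heq : f (K.erase t) = f K := by push_cast at hge; omega
      refine ⟨Finset.erase_subset_erase _ (Finset.subset_univ _), ?_, by rw [heq]; exact hr,
        by omega⟩
      rintro e ⟨het, he⟩
      have heK : e ∉ K := fun h => he (Finset.mem_erase.mpr ⟨het, h⟩)
      have h1 := hflat e heK
      have h2 := hsub K (insert e (K.erase t))
      have hu : K ∪ insert e (K.erase t) = insert e K := by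
        ext x; simp only [Finset.mem_union, Finset.mem_insert, Finset.mem_erase]; tauto
      have hi : K ∩ insert e (K.erase t) = K.erase t := by
        ext x
        simp only [Finset.mem_inter, Finset.mem_insert, Finset.mem_erase]
        constructor
        · rintro ⟨hx, rfl | hx'⟩
          · exact absurd hx heK
          · exact hx'
        · rintro ⟨h, hx⟩; exact ⟨hx, Or.inr ⟨h, hx⟩⟩
      rw [hu, hi] at h2
      omega
    · refine ⟨fun x hx => ?_, fun e he => hflat e he.2, hr, by omega⟩
      rw [Finset.mem_erase]
      exact ⟨fun h => htH (h ▸ hx), Finset.mem_univ _⟩
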